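/- Let p be an influence probability function on a finite vertex type V and let (v_1, …, v_k) be a greedy sequence for p: the v_ℓ are distinct and for every ℓ ≤ k and every u ∉ {v_1,…,v_{ℓ−1}}, MI(u | {v_1,…,v_{ℓ−1}}, p) ≤ MI(v_ℓ | {v_1,…,v_{ℓ−1}}, p). Then the greedy marginal values are nonincreasing: for every ℓ < k, MI(v_{ℓ+1} | {v_1,…,v_ℓ}, p) ≤ MI(v_ℓ | {v_1,…,v_{ℓ−1}}, p). -/

import Mathlib

open scoped Classical

/-- Weight of a live-edge set `L` under influence probability function `p`:
the product over all ordered pairs `(u,v)` with `u ≠ v` of `p u v` if the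
edge is live and `1 - p u v` otherwise. -/
noncomputable def edgeWeight {V : Type*} [Fintype V] [DecidableEq V]
    (p : V → V → ℝ) (L : Finset (V × V)) : ℝ :=
  ∏ e ∈ (Finset.univ : Finset V).offDiag, (if e ∈ L then p e.1 e.2 else 1 - p e.1 e.2)

/-- The set of vertices reachable from some vertex of `S` via edges of the
live-edge set `L` (reflexive–transitive closure). -/
noncomputable def reachSet {V : Type*} [Fintype V] [DecidableEq V]
    (S : Finset V) (L : Finset (V × V)) : Finset V :=
  Finset.univ.filter (fun x => ∃ s ∈ S, Relation.ReflTransGen (fun a b => (a, b) ∈ L) s x)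

/-- Influence spread `σ(S, p)`: the sum over all live-edge sets `L`
(subsets of the off-diagonal pairs) of `w(p,L) * |R(S,L)|`. -/
noncomputable def infSpread {V : Type*} [Fintype V] [DecidableEq V]
    (S : Finset V) (p : V → V → ℝ) : ℝ :=
  ∑ L ∈ ((Finset.univ : Finset V).offDiag).powerset, edgeWeight p L * (reachSet S L).card

/-- Marginal influence `MI(v | S, p) = σ(S ∪ {v}, p) − σ(S, p)`. -/
noncomputable def marginInf {V : Type*} [Fintype V] [DecidableEq V]
    (v : V) (S : Finset V) (p : V → V → ℝ) : ℝ :=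
  infSpread (insert v S) p - infSpread S p

/-!
For a fixed live-edge set, adding `v` to the seed set `S` gains exactly the vertices reachable from
`v` but not from `S`, and these only become fewer as `S` grows. Averaging over live-edge sets,
`MI(v | S, p)` is nonnegative and antitone in `S`. With `Sᵢ = {v₁, …, vᵢ₋₁}` and `i ≤ j`, this gives
`MI(vⱼ | Sⱼ, p) ≤ MI(vⱼ | Sᵢ, p) ≤ MI(vᵢ | Sᵢ, p)`, the second step being the greedy choice of `vᵢ`
(or, if `vⱼ ∈ Sᵢ`, the vanishing of the middle term).
-/

section Influence

variable {V : Type*} [Fintype V] [DecidableEq V] {p : V → V → ℝ} {v : V} {S T : Finset V}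

lemma mem_reachSet {L : Finset (V × V)} {x : V} :
    x ∈ reachSet S L ↔ ∃ s ∈ S, Relation.ReflTransGen (fun a b => (a, b) ∈ L) s x := by
  simp only [reachSet, Finset.mem_filter_univ]

lemma reachSet_union (S T : Finset V) (L : Finset (V × V)) :
    reachSet (S ∪ T) L = reachSet S L ∪ reachSet T L := by
  ext x
  simp only [Finset.mem_union, mem_reachSet, or_and_right, exists_or]

lemma reachSet_mono (hST : S ⊆ T) (L : Finset (V × V)) : reachSet S L ⊆ reachSet T L := by
  rw [← Finset.union_eq_right.2 hST, reachSet_union]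
  exact Finset.subset_union_left

lemma card_reachSet_insert (v : V) (S : Finset V) (L : Finset (V × V)) :
    (reachSet (insert v S) L).card =
      (reachSet {v} L \ reachSet S L).card + (reachSet S L).card := by
  rw [Finset.insert_eq, reachSet_union, Finset.card_sdiff_add_card]

lemma edgeWeight_nonneg (hp : ∀ u v, 0 ≤ p u v ∧ p u v ≤ 1) (L : Finset (V × V)) :
    0 ≤ edgeWeight p L := by
  refine Finset.prod_nonneg fun e _ => ?_
  split_ifs
  · exact (hp e.1 e.2).1
  · exact sub_nonneg.2 (hp e.1 e.2).2

lemma marginInf_eq_sum_card_sdiff (v : V) (S : Finset V) (p : V → V → ℝ) :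
    marginInf v S p = ∑ L ∈ (Finset.univ : Finset V).offDiag.powerset,
      edgeWeight p L * (reachSet {v} L \ reachSet S L).card := by
  simp only [marginInf, infSpread, card_reachSet_insert, Nat.cast_add, mul_add,
    Finset.sum_add_distrib, add_sub_cancel_right]

lemma marginInf_nonneg (hp : ∀ u v, 0 ≤ p u v ∧ p u v ≤ 1) (v : V) (S : Finset V) :
    0 ≤ marginInf v S p := by
  rw [marginInf_eq_sum_card_sdiff]
  exact Finset.sum_nonneg fun L _ => mul_nonneg (edgeWeight_nonneg hp L) (Nat.cast_nonneg _)

lemma marginInf_eq_zero_of_mem (hv : v ∈ S) (p : V → V → ℝ) : marginInf v S p = 0 := by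
  rw [marginInf, Finset.insert_eq_of_mem hv, sub_self]

lemma marginInf_antitone (hp : ∀ u v, 0 ≤ p u v ∧ p u v ≤ 1) (v : V) :
    Antitone fun S => marginInf v S p := by
  intro S T hST
  simp only [marginInf_eq_sum_card_sdiff]
  gcongr with L
  · exact edgeWeight_nonneg hp L
  · exact reachSet_mono hST L

theorem greedy_marginals_nonincreasing_general {ι : Type*} [Preorder ι] [LocallyFiniteOrderBot ι]
    (hp : ∀ u v, 0 ≤ p u v ∧ p u v ≤ 1) (v : ι → V)
    (hgreedy : ∀ i, ∀ u ∉ (Finset.Iio i).image v,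
      marginInf u ((Finset.Iio i).image v) p ≤ marginInf (v i) ((Finset.Iio i).image v) p) :
    Antitone fun i => marginInf (v i) ((Finset.Iio i).image v) p := by
  intro i j hij
  calc marginInf (v j) ((Finset.Iio j).image v) p
      ≤ marginInf (v j) ((Finset.Iio i).image v) p :=
        marginInf_antitone hp (v j) (Finset.image_subset_image (Finset.Iio_subset_Iio hij))
    _ ≤ marginInf (v i) ((Finset.Iio i).image v) p := by
        by_cases hmem : v j ∈ (Finset.Iio i).image v
        · exact (marginInf_eq_zero_of_mem hmem p).trans_le (marginInf_nonneg hp _ _)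
        · exact hgreedy i (v j) hmem

end Influence

/-- The marginal influence values along a greedy sequence are nonincreasing. -/
theorem greedy_marginals_nonincreasing {V : Type*} [Fintype V] [DecidableEq V] {k : ℕ}
    (p : V → V → ℝ)
    (hp1 : ∀ u v, 0 ≤ p u v ∧ p u v ≤ 1) (hp2 : ∀ v, p v v = 0)
    (v : Fin k → V) (hvinj : Function.Injective v)
    (hgreedy : ∀ ℓ : Fin k, ∀ u : V, u ∉ Finset.image v (Finset.Iio ℓ) →
      marginInf u (Finset.image v (Finset.Iio ℓ)) p ≤
        marginInf (v ℓ) (Finset.image v (Finset.Iio ℓ)) p) :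
    ∀ i j : Fin k, (j : ℕ) = (i : ℕ) + 1 →
      marginInf (v j) (Finset.image v (Finset.Iio j)) p ≤
        marginInf (v i) (Finset.image v (Finset.Iio i)) p := by
  intro i j hij
  exact greedy_marginals_nonincreasing_general hp1 v hgreedy (Fin.le_def.2 (by lia))
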